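/- For every m ≥ 0, there is a unique special positive braid of length m, namely the right power 1^[m+1] = σ_m σ_{m−1} ⋯ σ₂ σ₁: if β ∈ B_∞ is special and is a product of exactly m generators σ_{i₁} ⋯ σ_{i_m}, then β = σ_m ⋯ σ₂ σ₁; and conversely σ_m ⋯ σ₂ σ₁ is special. -/

import Mathlib

/-- The braid relations on generators indexed by `ℕ` (generator `i` stands for
the Artin generator `σ_{i+1}` of the paper). -/
def braidRels : Set (FreeGroup ℕ) :=
  {r | (∃ i j : ℕ, i + 2 ≤ j ∧
          r = .of i * .of j * (.of i)⁻¹ * (.of j)⁻¹) ∨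
       (∃ i : ℕ,
          r = .of i * .of (i + 1) * .of i *
              (.of (i + 1) * .of i * .of (i + 1))⁻¹)}

/-- The braid group on infinitely many strands. -/
abbrev Binf : Type := PresentedGroup braidRels

/-- `σ i` is the Artin generator `σ_{i+1}` of the paper (0-indexed). -/
def σ (i : ℕ) : Binf := PresentedGroup.of i

lemma mk_rel_eq_one {r : FreeGroup ℕ} (h : r ∈ braidRels) :
    PresentedGroup.mk braidRels r = 1 :=
  (QuotientGroup.eq_one_iff r).mpr (Subgroup.subset_normalClosure h)

lemma shift_lift_eq_one :
    ∀ r ∈ braidRels, FreeGroup.lift (fun n => σ (n + 1)) r = 1 := by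
  intro r hr
  have key : ∀ s ∈ braidRels, FreeGroup.lift (fun n => σ (n + 1)) s
      = PresentedGroup.mk braidRels (FreeGroup.map (· + 1) s) := by
    intro s _
    have : (FreeGroup.lift (fun n => σ (n + 1)) : FreeGroup ℕ →* Binf)
        = (PresentedGroup.mk braidRels).comp (FreeGroup.map (· + 1)) := by
      apply FreeGroup.ext_hom
      intro x
      simp [σ, PresentedGroup.of]
    rw [this]; rfl
  rw [key r hr]
  apply mk_rel_eq_one
  rcases hr with ⟨i, j, hij, rfl⟩ | ⟨i, rfl⟩
  · exact Or.inl ⟨i + 1, j + 1, by omega, by simp⟩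
  · exact Or.inr ⟨i + 1, by simp⟩

/-- The shift endomorphism of the braid group, mapping `σ i` to `σ (i+1)`. -/
def sh : Binf →* Binf := PresentedGroup.toGroup shift_lift_eq_one

@[simp] lemma sh_σ (i : ℕ) : sh (σ i) = σ (i + 1) :=
  PresentedGroup.toGroup.of shift_lift_eq_one

/-- The shifted-conjugation (selfdistributive) operation on `Binf`:
`β₁ ▷ β₂ = β₁ · sh β₂ · σ₁ · (sh β₁)⁻¹`. -/
def sc (β₁ β₂ : Binf) : Binf := β₁ * sh β₂ * σ 0 * (sh β₁)⁻¹

/-- The set of special braids: the smallest subset of `Binf` containing the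
unit braid and closed under the shifted-conjugation operation `sc`. -/
def Special : Set Binf :=
  {x | ∀ P : Binf → Prop, P 1 → (∀ a b, P a → P b → P (sc a b)) → P x}

/-- `rpow a m` is the `m`-th right power `a^[m]` (defined for `m ≥ 1`;
`rpow a 0` is a junk value). -/
def rpow (a : Binf) : ℕ → Binf
  | 0 => a
  | 1 => a
  | m + 2 => sc a (rpow a (m + 1))

/-- The permutation of integer sequences attached to the generator `i`. -/
def genPerm (i : ℕ) : Equiv.Perm (ℕ → ℤ) where
  toFun x n := if n = i then x (i + 1) else if n = i + 1 then x i - 1 else x n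
  invFun x n := if n = i then x (i + 1) + 1 else if n = i + 1 then x i else x n
  left_inv x := by
    funext n
    by_cases h1 : n = i
    · subst h1; simp
    · by_cases h2 : n = i + 1
      · subst h2; simp
      · simp [h1, h2]
  right_inv x := by
    funext n
    by_cases h1 : n = i
    · subst h1; simp
    · by_cases h2 : n = i + 1
      · subst h2; simp
      · simp [h1, h2]

lemma genPerm_apply (i : ℕ) (x : ℕ → ℤ) (n : ℕ) :
    genPerm i x n = if n = i then x (i + 1) else if n = i + 1 then x i - 1 else x n := rfl

lemma genPerm_rels : ∀ r ∈ braidRels, FreeGroup.lift genPerm r = 1 := by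
  rintro r (⟨i, j, hij, rfl⟩ | ⟨i, rfl⟩)
  · have : genPerm i * genPerm j = genPerm j * genPerm i := by
      ext x n
      simp only [Equiv.Perm.mul_apply, genPerm_apply]
      grind
    simp [this]
  · have : genPerm i * genPerm (i + 1) * genPerm i
        = genPerm (i + 1) * genPerm i * genPerm (i + 1) := by
      ext x n
      simp only [Equiv.Perm.mul_apply, genPerm_apply]
      grind
    simp only [map_mul, map_inv, FreeGroup.lift_apply_of]
    rw [this, mul_inv_cancel]

/-- The action of braids on integer sequences. -/
def act : Binf →* Equiv.Perm (ℕ → ℤ) := PresentedGroup.toGroup genPerm_rels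

lemma act_σ (i : ℕ) : act (σ i) = genPerm i := PresentedGroup.toGroup.of genPerm_rels

/-- Prepend an entry to a sequence. -/
def scons (v : ℤ) (y : ℕ → ℤ) : ℕ → ℤ
  | 0 => v
  | n + 1 => y n

lemma act_sh (b : Binf) : ∀ v y, act (sh b) (scons v y) = scons v (act b y) := by
  have hb : b ∈ Subgroup.closure (Set.range (PresentedGroup.of (rels := braidRels))) := by
    rw [PresentedGroup.closure_range_of]; trivial
  induction hb using Subgroup.closure_induction with
  | mem x hx =>
    obtain ⟨i, rfl⟩ := hx
    intro v y
    change act (sh (σ i)) _ = scons v (act (σ i) y)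
    rw [sh_σ, act_σ, act_σ]
    funext n
    cases n with
    | zero => simp [genPerm_apply, scons]
    | succ n => simp [genPerm_apply, scons]
  | one => intro v y; simp
  | mul a b _ _ ha hb => intro v y; simp [Equiv.Perm.mul_apply, ha, hb]
  | inv a _ ha =>
    intro v y
    rw [map_inv, map_inv, map_inv, Equiv.Perm.inv_eq_iff_eq, ha]
    simp

/-- The sequence with entry `c` at `p` and zero elsewhere. -/
def spike (p c : ℕ) : ℕ → ℤ := fun n => if n = p then (c : ℤ) else 0

lemma special_act {β : Binf} (h : β ∈ Special) : ∃ k : ℕ, act β (spike 0 k) = 0 := by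
  apply h (fun β => ∃ k : ℕ, act β (spike 0 k) = 0)
  · exact ⟨0, by funext n; simp [spike]⟩
  · rintro a b ⟨ka, ha⟩ ⟨kb, hb⟩
    refine ⟨kb + 1, ?_⟩
    have e1 : spike 0 (kb + 1) = scons (kb + 1) 0 := by
      funext n; cases n <;> simp [spike, scons]
    have e2 : (act (sh a))⁻¹ (scons (kb + 1) 0) = scons (kb + 1) (spike 0 ka) := by
      rw [Equiv.Perm.inv_eq_iff_eq, act_sh, ha]
    have e3 : genPerm 0 (scons (kb + 1) (spike 0 ka)) = scons ka (spike 0 kb) := by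
      funext n
      rcases n with _ | _ | n <;> simp [genPerm_apply, spike, scons]
    have e4 : scons ka 0 = spike 0 ka := by
      funext n; cases n <;> simp [spike, scons]
    simp only [sc, map_mul, map_inv, Equiv.Perm.mul_apply, act_σ]
    rw [e1, e2, e3, act_sh, hb, e4, ha]

lemma nonneg_of_act (l : List ℕ) : ∀ x : ℕ → ℤ, (∀ n, 0 ≤ act ((l.map σ).prod) x n) →
    ∀ n, 0 ≤ x n := by
  induction l with
  | nil => intro x h; simpa using h
  | cons i l ih =>
    intro x h
    apply ih
    simp only [List.map_cons, List.prod_cons, map_mul, Equiv.Perm.mul_apply, act_σ] at h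
    intro n
    generalize act ((l.map σ).prod) x = y at h
    have h0 := h i
    have h1 := h (i + 1)
    have h2 := h n
    simp only [genPerm_apply] at h0 h1 h2
    grind

lemma word_unique (l : List ℕ) : ∀ p c : ℕ, act ((l.map σ).prod) (spike p c) = 0 →
    l = (List.range' p c).reverse := by
  induction l using List.reverseRecOn with
  | nil =>
    intro p c h
    have := congrFun h p
    simp [spike] at this
    simp [this]
  | append_singleton l i ih =>
    intro p c h
    simp only [List.map_append, List.map_cons, List.map_nil, List.prod_append, List.prod_cons,
      List.prod_nil, mul_one, map_mul, Equiv.Perm.mul_apply, act_σ] at h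
    have hn := nonneg_of_act l _ (fun n => by rw [h]; simp) (i + 1)
    have hi : i = p ∧ 1 ≤ c := by
      simp only [genPerm_apply, spike] at hn
      grind
    obtain ⟨rfl, hc⟩ := hi
    obtain ⟨c, rfl⟩ : ∃ d, c = d + 1 := ⟨c - 1, by omega⟩
    have e : genPerm i (spike i (c + 1)) = spike (i + 1) c := by
      funext n
      simp only [genPerm_apply, spike]
      grind
    rw [e] at h
    rw [ih _ _ h, List.range'_succ, List.reverse_cons]

lemma prod_succ (m : ℕ) : ((List.range (m + 1)).reverse.map σ).prod
    = sc 1 ((List.range m).reverse.map σ).prod := by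
  rw [List.range_succ_eq_map]
  simp [sc, map_list_prod, Function.comp_def]

lemma rpow_eq (m : ℕ) : rpow (1 : Binf) (m + 1) = ((List.range m).reverse.map σ).prod := by
  induction m with
  | zero => simp [rpow]
  | succ m ih => rw [prod_succ, ← ih, rpow]

/-- for every `m`, the unique special positive braid of length
`m` is the right power `1^[m+1] = σ_m ⋯ σ₂ σ₁` (0-indexed:
`σ (m-1) * ⋯ * σ 1 * σ 0 = ((List.range m).reverse.map σ).prod`). -/
theorem unique_special_positive (m : ℕ) :
    rpow (1 : Binf) (m + 1) = ((List.range m).reverse.map σ).prod ∧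
    ((List.range m).reverse.map σ).prod ∈ Special ∧
    (∀ β : Binf, β ∈ Special →
      (∃ l : List ℕ, l.length = m ∧ β = (l.map σ).prod) →
      β = ((List.range m).reverse.map σ).prod) := by
  refine ⟨rpow_eq m, ?_, ?_⟩
  · induction m with
    | zero => intro P h1 _; simpa using h1
    | succ m ih =>
      intro P h1 h2
      rw [prod_succ]
      exact h2 _ _ h1 (ih P h1 h2)
  · rintro β hβ ⟨l, hl, rfl⟩
    obtain ⟨k, hk⟩ := special_act hβ
    have e := word_unique l 0 k hk
    have hk' : k = m := by rw [← hl, e]; simp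
    rw [e, hk', List.range_eq_range']
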